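/- arXiv:2306.04483 — 2 statements merged into one kernel-verified Lean document; each statement's English description precedes it below -/
import Mathlib

section
/- Let d ≥ 1 and let φ ∈ Φ_d have a strictly positive nonincreasing d-radial spectral density f_d. Let A₁, A₂ be symmetric positive definite real d×d matrices with A₁ ⪰ A₂ (i.e., A₁ − A₂ positive semidefinite), and let b₁, b₂ ≥ 0. Then the function h ↦ b₁ φ(√(hᵀA₁h)) − b₂ φ(√(hᵀA₂h)) is a stationary covariance function on ℝ^d if and only if b₁ ≥ b₂ (det A₁ / det A₂)^{1/2}. -/
open MeasureTheory
open scoped BigOperators RealInnerProductSpace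

noncomputable section

/-- A function `C : ℝ^d → ℝ` is a stationary covariance function if it is
positive semidefinite. -/
def IsStationaryCovariance (d : ℕ) (C : EuclideanSpace ℝ (Fin d) → ℝ) : Prop :=
  ∀ (n : ℕ) (x : Fin n → EuclideanSpace ℝ (Fin d)) (v : Fin n → ℝ),
    0 ≤ ∑ i, ∑ j, v i * v j * C (x i - x j)

/-- `φ : [0,∞) → ℝ` belongs to the class `Φ_d`. -/
def MemPhi (d : ℕ) (φ : ℝ → ℝ) : Prop :=
  ContinuousOn φ (Set.Ici 0) ∧ IsStationaryCovariance d (fun h => φ ‖h‖)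

/-- `f` is a `d`-radial spectral density of `φ`. -/
def IsRadialSpectralDensity (d : ℕ) (φ f : ℝ → ℝ) : Prop :=
  (∀ u : ℝ, 0 ≤ u → 0 ≤ f u) ∧
  MeasureTheory.Integrable (fun ω : EuclideanSpace ℝ (Fin d) => f ‖ω‖) ∧
  ∀ h : EuclideanSpace ℝ (Fin d),
    (φ ‖h‖ : ℂ) = ∫ ω : EuclideanSpace ℝ (Fin d),
      Complex.exp (Complex.I * ((⟪h, ω⟫ : ℝ) : ℂ)) * ((f ‖ω‖ : ℝ) : ℂ)

/-- The quadratic form `hᵀ A h`. -/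
def quadForm {d : ℕ} (A : Matrix (Fin d) (Fin d) ℝ) (h : EuclideanSpace ℝ (Fin d)) : ℝ :=
  ∑ i, ∑ j, h i * A i j * h j

/-!
If `f` is the radial spectral density of `φ`, the change of variables `ω ↦ √A⁻¹ ω` shows that
`h ↦ φ (√(hᵀ A h))` has spectral density `ω ↦ (det A)^(-1/2) f (√(ωᵀ A⁻¹ ω))`. The function in
question therefore has a spectral density `g`, a difference of two such densities, and the point is
that `g ≥ 0` everywhere as soon as `g ≥ 0` near the origin.

If `b₂ (det A₂)^(-1/2) ≤ b₁ (det A₁)^(-1/2)`, then `g ≥ 0`, because `A₁ ⪰ A₂` gives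
`A₁⁻¹ ⪯ A₂⁻¹` and `f` is nonincreasing. Conversely, positive semidefiniteness forces
`E[C(X - Y)] ≥ 0` for independent identically distributed `X` and `Y`. For Gaussian `X` this is the
integral of `g` against a Gaussian kernel, which concentrates at the origin as the variance grows.
Hence the limit of `g` at the origin is nonnegative, and this limit is
`b₁ (det A₁)^(-1/2) - b₂ (det A₂)^(-1/2)` times `f(0+) > 0`.
-/

open Filter Topology ProbabilityTheory
open scoped ComplexOrder MatrixOrder

section Sampling

lemma integral_comp_of_measurePreserving {α β F : Type*} [MeasurableSpace α] [MeasurableSpace β]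
    [NormedAddCommGroup F] [NormedSpace ℝ F] {μ : Measure α} {ν : Measure β} {f : α → β}
    (hf : MeasurePreserving f μ ν) {g : β → F} (hg : AEStronglyMeasurable g ν) :
    ∫ x, g (f x) ∂μ = ∫ y, g y ∂ν := by
  rw [← hf.map_eq, integral_map hf.aemeasurable (hf.map_eq ▸ hg)]

variable {α : Type*} [MeasurableSpace α] {μ : Measure α} [IsProbabilityMeasure μ]

lemma measurePreserving_eval_pair {ι : Type*} [Fintype ι] {i j : ι} (hij : i ≠ j) :
    MeasurePreserving (fun x : ι → α => (x i, x j)) (Measure.pi fun _ => μ) (μ.prod μ) := by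
  have hindep : IndepFun (fun x : ι → α => x i) (fun x => x j) (Measure.pi fun _ => μ) :=
    (iIndepFun_pi (X := fun _ => id) fun _ => aemeasurable_id).indepFun hij
  refine ⟨by fun_prop, ?_⟩
  rw [hindep.map_prod_eq_prod_map_map (measurable_pi_apply i).aemeasurable
    (measurable_pi_apply j).aemeasurable, (measurePreserving_eval (fun _ => μ) i).map_eq,
    (measurePreserving_eval (fun _ => μ) j).map_eq]

/- If the kernel had negative mean, the `n ^ 2 - n` off-diagonal terms of a large i.i.d. sample
would outweigh the `n` diagonal ones. -/
lemma integral_prod_self_nonneg {K : α → α → ℝ}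
    (hK : Integrable (fun p : α × α => K p.1 p.2) (μ.prod μ))
    (hdiag : Integrable (fun x => K x x) μ)
    (hpos : ∀ (n : ℕ) (x : Fin n → α), 0 ≤ ∑ i, ∑ j, K (x i) (x j)) :
    0 ≤ ∫ p : α × α, K p.1 p.2 ∂(μ.prod μ) := by
  set D := ∫ x, K x x ∂μ
  set I := ∫ p : α × α, K p.1 p.2 ∂(μ.prod μ)
  have hsample (n : ℕ) (i j : Fin n) :
      Integrable (fun x => K (x i) (x j)) (Measure.pi fun _ => μ) ∧
        ∫ x, K (x i) (x j) ∂(Measure.pi fun _ => μ) = I + if i = j then D - I else 0 := by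
    rcases eq_or_ne i j with rfl | hij
    · have hmp := measurePreserving_eval (fun _ : Fin n => μ) i
      exact ⟨hmp.integrable_comp_of_integrable hdiag,
        by simpa using integral_comp_of_measurePreserving hmp hdiag.1⟩
    · have hmp := measurePreserving_eval_pair (μ := μ) hij
      exact ⟨hmp.integrable_comp_of_integrable hK,
        by simpa [hij] using integral_comp_of_measurePreserving hmp hK.1⟩
  have hmean (n : ℕ) : 0 ≤ D + n * I := by
    have hsum : ∫ x, ∑ i : Fin (n + 1), ∑ j, K (x i) (x j) ∂(Measure.pi fun _ => μ) =
        (n + 1) * (D + n * I) := by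
      rw [integral_finsetSum _ fun i _ => integrable_finsetSum _ fun j _ => (hsample _ i j).1]
      simp_rw [integral_finsetSum _ fun j _ => (hsample (n + 1) _ j).1, (hsample _ _ _).2,
        Finset.sum_add_distrib, Finset.sum_ite_eq, Finset.mem_univ, if_true, Finset.sum_const,
        Finset.card_univ, Fintype.card_fin, nsmul_eq_mul]
      push_cast
      ring
    exact nonneg_of_mul_nonneg_right
      (hsum ▸ integral_nonneg fun x => hpos (n + 1) x) (by positivity)
  by_contra! hI
  obtain ⟨n, hn⟩ := exists_nat_gt (D / -I)
  rw [div_lt_iff₀ (neg_pos.2 hI)] at hn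
  linarith [hmean n]

end Sampling

section SpectralDensity

variable {E : Type*} [NormedAddCommGroup E] [InnerProductSpace ℝ E] [FiniteDimensional ℝ E]
  [MeasurableSpace E] [BorelSpace E]

lemma tendsto_integral_exp_neg_sq_mul {g : E → ℝ} (hg : Integrable g) (hcont : ContinuousAt g 0) :
    Tendsto (fun c : ℝ => (Real.pi * c) ^ (Module.finrank ℝ E / 2 : ℝ) *
      ∫ ω, Real.exp (-‖(Real.pi * √c) • ω‖ ^ 2) * g ω) atTop (𝓝 (g 0)) := by
  refine ((Complex.continuous_re.tendsto _).comp
    (Real.tendsto_integral_gaussian_smul' (f := fun ω => (g ω : ℂ)) hg.ofReal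
      (Complex.continuous_ofReal.continuousAt.comp hcont))).congr' ?_
  filter_upwards [eventually_ge_atTop 0] with c hc
  have hpow : (Real.pi * c : ℂ) ^ (Module.finrank ℝ E / 2 : ℂ) =
      ((Real.pi * c) ^ (Module.finrank ℝ E / 2 : ℝ) : ℝ) := by
    rw [Complex.ofReal_cpow (by positivity)]
    push_cast
    rfl
  have hexp (ω : E) : Complex.exp (-Real.pi ^ 2 * c * ‖0 - ω‖ ^ 2) =
      (Real.exp (-‖(Real.pi * √c) • ω‖ ^ 2) : ℝ) := by
    rw [norm_smul, Real.norm_of_nonneg (by positivity), mul_pow, mul_pow, Real.sq_sqrt hc,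
      zero_sub, norm_neg]
    push_cast
    ring_nf
  simp only [Function.comp_apply, hpow, hexp, smul_eq_mul]
  simp only [mul_assoc, integral_const_mul, ← Complex.ofReal_mul, integral_complex_ofReal,
    Complex.ofReal_re]

/-- `g` is a spectral density of `C`: the function `C` is the Fourier transform of the integrable
function `g`, which is allowed to take negative values. -/
structure HasSpectralDensity (C g : E → ℝ) : Prop where
  integrable : Integrable g
  eq_integral : ∀ h, (C h : ℂ) = ∫ ω, Complex.exp (Complex.I * (⟪h, ω⟫ : ℝ)) * (g ω : ℝ)

lemma norm_exp_I_mul_ofReal_mul (x : ℝ) (z : ℂ) :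
    ‖Complex.exp (Complex.I * x) * z‖ = ‖z‖ := by
  rw [norm_mul, Complex.norm_exp_I_mul_ofReal, one_mul]

lemma integrable_exp_inner_mul {g : E → ℝ} (hg : Integrable g) (h : E) :
    Integrable fun ω => Complex.exp (Complex.I * (⟪h, ω⟫ : ℝ)) * (g ω : ℝ) :=
  hg.ofReal.bdd_mul (c := 1) (Continuous.aestronglyMeasurable (by fun_prop))
    (ae_of_all _ fun _ => (Complex.norm_exp_I_mul_ofReal _).le)

namespace HasSpectralDensity

variable {C C₁ C₂ g g₁ g₂ : E → ℝ}

lemma const_mul (hC : HasSpectralDensity C g) (b : ℝ) :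
    HasSpectralDensity (fun h => b * C h) (fun ω => b * g ω) where
  integrable := hC.integrable.const_mul b
  eq_integral h := by
    rw [Complex.ofReal_mul, hC.eq_integral, ← integral_const_mul]
    simp_rw [Complex.ofReal_mul, mul_left_comm]

lemma sub (h₁ : HasSpectralDensity C₁ g₁) (h₂ : HasSpectralDensity C₂ g₂) :
    HasSpectralDensity (fun h => C₁ h - C₂ h) (fun ω => g₁ ω - g₂ ω) where
  integrable := h₁.integrable.sub h₂.integrable
  eq_integral h := by
    rw [Complex.ofReal_sub, h₁.eq_integral, h₂.eq_integral, ← integral_sub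
      (integrable_exp_inner_mul h₁.integrable h) (integrable_exp_inner_mul h₂.integrable h)]
    simp_rw [Complex.ofReal_sub, mul_sub]

lemma congr_ae (hC : HasSpectralDensity C g₁) (hg : g₁ =ᵐ[volume] g₂) :
    HasSpectralDensity C g₂ where
  integrable := hC.integrable.congr hg
  eq_integral h := by
    rw [hC.eq_integral]
    exact integral_congr_ae (hg.mono fun ω hω => by simp only [hω])

lemma comp_of_inner_eq (hC : HasSpectralDensity C g) {T : E → E} {S : E →L[ℝ] E}
    (hTS : ∀ h ω, ⟪T h, S ω⟫ = ⟪h, ω⟫) :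
    HasSpectralDensity (fun h => C (T h)) (fun ω => |S.det| * g (S ω)) := by
  have hinj : Function.Injective S := (injective_iff_map_eq_zero S).2 fun ω hω =>
    (inner_self_eq_zero (𝕜 := ℝ)).1 (by rw [← hTS, hω, inner_zero_right])
  have himage : S '' Set.univ = Set.univ := by
    rw [Set.image_univ, Set.range_eq_univ]
    exact LinearMap.injective_iff_surjective.1 hinj
  have hderiv : ∀ ω ∈ Set.univ, HasFDerivWithinAt S S Set.univ ω :=
    fun _ _ => S.hasFDerivWithinAt
  constructor
  · have := integrableOn_image_iff_integrableOn_abs_det_fderiv_smul volume MeasurableSet.univ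
      hderiv hinj.injOn g
    rw [himage, integrableOn_univ, integrableOn_univ] at this
    exact this.1 hC.integrable
  · intro h
    have := integral_image_eq_integral_abs_det_fderiv_smul volume MeasurableSet.univ hderiv
      hinj.injOn fun ω => Complex.exp (Complex.I * (⟪T h, ω⟫ : ℝ)) * (g ω : ℝ)
    rw [himage, setIntegral_univ, setIntegral_univ] at this
    rw [hC.eq_integral, this]
    simp_rw [hTS, Complex.real_smul, Complex.ofReal_mul, mul_left_comm]

lemma continuous (hC : HasSpectralDensity C g) : Continuous C := by
  suffices Continuous fun h => (C h : ℂ) from Complex.continuous_re.comp this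
  simp_rw [hC.eq_integral]
  exact continuous_of_dominated (fun h => (integrable_exp_inner_mul hC.integrable h).1)
    (fun h => ae_of_all _ fun ω => (norm_exp_I_mul_ofReal_mul _ _).le) hC.integrable.ofReal.norm
    (ae_of_all _ fun ω => by fun_prop)

lemma norm_le (hC : HasSpectralDensity C g) (h : E) : ‖C h‖ ≤ ∫ ω, ‖g ω‖ := by
  rw [← Complex.norm_real, hC.eq_integral]
  refine (norm_integral_le_integral_norm _).trans_eq ?_
  simp_rw [norm_exp_I_mul_ofReal_mul, Complex.norm_real]

lemma integral_prod_self_sub (hC : HasSpectralDensity C g) (μ : Measure E) [IsFiniteMeasure μ] :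
    ∫ p : E × E, C (p.1 - p.2) ∂(μ.prod μ) = ∫ ω, ‖charFun μ ω‖ ^ 2 * g ω := by
  have hswap : Integrable
      (fun q : (E × E) × E => Complex.exp (Complex.I * (⟪q.1.1 - q.1.2, q.2⟫ : ℝ)) * (g q.2 : ℝ))
      ((μ.prod μ).prod volume) :=
    (hC.integrable.comp_snd (μ.prod μ)).ofReal.bdd_mul (c := 1)
      (Continuous.aestronglyMeasurable (by fun_prop))
      (ae_of_all _ fun _ => (Complex.norm_exp_I_mul_ofReal _).le)
  have hchar (ω : E) : ∫ p : E × E, Complex.exp (Complex.I * (⟪p.1 - p.2, ω⟫ : ℝ)) ∂(μ.prod μ) =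
      ((‖charFun μ ω‖ ^ 2 : ℝ) : ℂ) := by
    calc _ = ∫ p : E × E, Complex.exp (⟪p.1, ω⟫ * Complex.I) *
          Complex.exp (⟪p.2, -ω⟫ * Complex.I) ∂(μ.prod μ) := by
          simp_rw [← Complex.exp_add, inner_sub_left, inner_neg_right]
          refine integral_congr_ae (ae_of_all _ fun p => ?_)
          push_cast
          ring_nf
      _ = charFun μ ω * charFun μ (-ω) :=
          integral_prod_mul (fun x : E => Complex.exp (⟪x, ω⟫ * Complex.I))
            (fun x : E => Complex.exp (⟪x, -ω⟫ * Complex.I))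
      _ = _ := by rw [charFun_neg, Complex.mul_conj, Complex.normSq_eq_norm_sq]
  rw [← Complex.ofReal_inj, ← integral_complex_ofReal, ← integral_complex_ofReal]
  simp_rw [hC.eq_integral]
  rw [integral_integral_swap hswap]
  simp_rw [integral_mul_const, hchar, Complex.ofReal_mul]

end HasSpectralDensity

end SpectralDensity

section StationaryCovariance

variable {d : ℕ} {C g : EuclideanSpace ℝ (Fin d) → ℝ}

lemma HasSpectralDensity.isStationaryCovariance (hC : HasSpectralDensity C g) (hg : 0 ≤ g) :
    IsStationaryCovariance d C := by
  intro n x v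
  let P (ω : EuclideanSpace ℝ (Fin d)) : ℂ :=
    ∑ i, v i * Complex.exp (Complex.I * (⟪x i, ω⟫ : ℝ))
  have hP (ω) : ∑ i, ∑ j, (v i * v j : ℂ) *
      (Complex.exp (Complex.I * (⟪x i - x j, ω⟫ : ℝ)) * (g ω : ℝ)) =
      ((Complex.normSq (P ω) * g ω : ℝ) : ℂ) := by
    rw [Complex.ofReal_mul, ← Complex.mul_conj, map_sum, Finset.sum_mul_sum, Finset.sum_mul]
    refine Finset.sum_congr rfl fun i _ => ?_
    rw [Finset.sum_mul]
    refine Finset.sum_congr rfl fun j _ => ?_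
    rw [map_mul, ← Complex.exp_conj, map_mul, Complex.conj_I, Complex.conj_ofReal,
      Complex.conj_ofReal, inner_sub_left, Complex.ofReal_sub, mul_sub, sub_eq_add_neg,
      Complex.exp_add, neg_mul]
    ring
  have hint (i j : Fin n) := (integrable_exp_inner_mul hC.integrable (x i - x j)).const_mul
    (v i * v j : ℂ)
  have hsum : ∑ i, ∑ j, v i * v j * C (x i - x j) = ∫ ω, Complex.normSq (P ω) * g ω := by
    rw [← Complex.ofReal_inj, ← integral_complex_ofReal]
    simp_rw [← hP]
    rw [integral_finsetSum _ fun i _ => integrable_finsetSum _ fun j _ => hint i j]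
    simp_rw [integral_finsetSum _ fun j _ => hint _ j, integral_const_mul, ← hC.eq_integral]
    push_cast
    rfl
  rw [hsum]
  exact integral_nonneg fun ω => mul_nonneg (Complex.normSq_nonneg _) (hg ω)

namespace IsStationaryCovariance

lemma integral_norm_charFun_sq_mul_nonneg (hpsd : IsStationaryCovariance d C)
    (hC : HasSpectralDensity C g) (μ : Measure (EuclideanSpace ℝ (Fin d)))
    [IsProbabilityMeasure μ] : 0 ≤ ∫ ω, ‖charFun μ ω‖ ^ 2 * g ω := by
  have hcont := hC.continuous
  rw [← hC.integral_prod_self_sub]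
  refine integral_prod_self_nonneg (K := fun x y => C (x - y)) ?_ ?_ fun n x => ?_
  · exact .of_bound (Continuous.aestronglyMeasurable (by fun_prop)) _
      (ae_of_all _ fun p => hC.norm_le _)
  · simp
  · simpa using hpsd n x 1

lemma integral_exp_neg_sq_mul_nonneg (hpsd : IsStationaryCovariance d C)
    (hC : HasSpectralDensity C g) (s : ℝ) : 0 ≤ ∫ ω, Real.exp (-‖s • ω‖ ^ 2) * g ω := by
  have hchar (ω : EuclideanSpace ℝ (Fin d)) :
      ‖charFun ((stdGaussian (EuclideanSpace ℝ (Fin d))).map (s • ·)) ω‖ ^ 2 =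
        Real.exp (-‖s • ω‖ ^ 2) := by
    have : charFun ((stdGaussian (EuclideanSpace ℝ (Fin d))).map (s • ·)) ω =
        (Real.exp (-‖s • ω‖ ^ 2 / 2) : ℝ) := by
      rw [charFun_map_smul, charFun_stdGaussian]
      push_cast
      rfl
    rw [this, Complex.norm_real, Real.norm_eq_abs, Real.abs_exp, ← Real.exp_nat_mul]
    congr 1
    push_cast
    ring
  have : IsProbabilityMeasure ((stdGaussian (EuclideanSpace ℝ (Fin d))).map (s • ·)) :=
    Measure.isProbabilityMeasure_map (by fun_prop)
  simpa only [hchar] using hpsd.integral_norm_charFun_sq_mul_nonneg hC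
    ((stdGaussian (EuclideanSpace ℝ (Fin d))).map (s • ·))

lemma nonneg_of_continuousAt_zero (hpsd : IsStationaryCovariance d C)
    (hC : HasSpectralDensity C g) (hcont : ContinuousAt g 0) : 0 ≤ g 0 := by
  refine ge_of_tendsto (tendsto_integral_exp_neg_sq_mul hC.integrable hcont) ?_
  filter_upwards [eventually_ge_atTop 0] with c hc
  exact mul_nonneg (by positivity) (hpsd.integral_exp_neg_sq_mul_nonneg hC _)

lemma nonneg_of_tendsto_nhdsNE_zero [NeZero d] (hpsd : IsStationaryCovariance d C)
    (hC : HasSpectralDensity C g) {L : ℝ} (hL : Tendsto g (𝓝[≠] 0) (𝓝 L)) : 0 ≤ L := by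
  have hae : g =ᵐ[volume] Function.update g 0 L :=
    (ae_iff.2 (by simp) : ∀ᵐ ω : EuclideanSpace ℝ (Fin d), ω ≠ 0).mono fun ω hω =>
      (Function.update_of_ne hω _ _).symm
  simpa using hpsd.nonneg_of_continuousAt_zero (hC.congr_ae hae) (continuousAt_update_same.2 hL)

end IsStationaryCovariance

end StationaryCovariance

section QuadForm

open Matrix

section RCLike

variable {n 𝕜 : Type*} [Fintype n] [DecidableEq n] [RCLike 𝕜] {A B : Matrix n n 𝕜}

lemma posSemidef_inv_sub_inv (hA : A.PosDef) (hB : B.PosDef) (hAB : (A - B).PosSemidef) :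
    (B⁻¹ - A⁻¹).PosSemidef := by
  have hAi := hA.isUnit.invertible
  have hBi := hB.inv.isUnit.invertible
  have hblock : (fromBlocks A 1 1ᴴ B⁻¹).PosSemidef := by
    rw [hB.inv.fromBlocks₂₂]
    simpa [nonsing_inv_nonsing_inv _ hB.det_pos.ne'.isUnit] using hAB
  rw [hA.fromBlocks₁₁] at hblock
  simpa using hblock

lemma inner_toEuclideanCLM_left_eq_right (hA : A.IsHermitian) (x y : EuclideanSpace 𝕜 n) :
    inner 𝕜 (toEuclideanCLM (𝕜 := 𝕜) A x) y = inner 𝕜 x (toEuclideanCLM (𝕜 := 𝕜) A y) := by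
  rw [← ContinuousLinearMap.adjoint_inner_left, ← ContinuousLinearMap.star_eq_adjoint, ← map_star,
    star_eq_conjTranspose, hA.eq]

lemma det_toEuclideanCLM (A : Matrix n n 𝕜) :
    (toEuclideanCLM (𝕜 := 𝕜) A).det = A.det := by
  rw [ContinuousLinearMap.det, coe_toEuclideanCLM_eq_toEuclideanLin]
  exact LinearMap.det_toLpLin _ _

end RCLike

variable {d : ℕ} {A A₁ A₂ : Matrix (Fin d) (Fin d) ℝ}

lemma quadForm_eq_inner (A : Matrix (Fin d) (Fin d) ℝ) (h : EuclideanSpace ℝ (Fin d)) :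
    quadForm A h = ⟪h, toEuclideanCLM (𝕜 := ℝ) A h⟫ := by
  simp only [inner_toEuclideanCLM, quadForm, dotProduct, mulVec, Finset.mul_sum, mul_assoc]

lemma continuous_quadForm (A : Matrix (Fin d) (Fin d) ℝ) : Continuous (quadForm A) := by
  unfold quadForm
  fun_prop

lemma quadForm_pos (hA : A.PosDef) {h : EuclideanSpace ℝ (Fin d)} (hh : h ≠ 0) :
    0 < quadForm A h := by
  rw [quadForm_eq_inner, inner_toEuclideanCLM]
  exact hA.dotProduct_mulVec_pos (by simpa using hh)

lemma quadForm_le_quadForm (hA : (A₁ - A₂).PosSemidef) (h : EuclideanSpace ℝ (Fin d)) :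
    quadForm A₂ h ≤ quadForm A₁ h := by
  rw [← sub_nonneg, quadForm_eq_inner, quadForm_eq_inner, ← inner_sub_right,
    ← _root_.sub_apply, ← map_sub, inner_toEuclideanCLM]
  exact hA.dotProduct_mulVec_nonneg h.ofLp

lemma norm_toEuclideanCLM_sqrt (hA : A.PosSemidef) (h : EuclideanSpace ℝ (Fin d)) :
    ‖toEuclideanCLM (𝕜 := ℝ) (CFC.sqrt A) h‖ = √(quadForm A h) := by
  rw [norm_eq_sqrt_real_inner, inner_toEuclideanCLM_left_eq_right (CFC.sqrt_nonneg A).posSemidef.1,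
    ← mul_apply_eq_comp, ← map_mul, CFC.sqrt_mul_sqrt_self A hA.nonneg, quadForm_eq_inner]

lemma inner_toEuclideanCLM_sqrt_inv (hA : A.PosDef) (h ω : EuclideanSpace ℝ (Fin d)) :
    ⟪toEuclideanCLM (𝕜 := ℝ) (CFC.sqrt A) h, toEuclideanCLM (𝕜 := ℝ) (CFC.sqrt A⁻¹) ω⟫ =
      ⟪h, ω⟫ := by
  have hdet : IsUnit (CFC.sqrt A).det := by
    rw [hA.posSemidef.det_sqrt, RCLike.sqrt_real, isUnit_iff_ne_zero]
    exact (Real.sqrt_pos.2 hA.det_pos).ne'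
  rw [inner_toEuclideanCLM_left_eq_right (CFC.sqrt_nonneg A).posSemidef.1,
    ← mul_apply_eq_comp, ← map_mul, ← hA.posSemidef.inv_sqrt, mul_nonsing_inv _ hdet, map_one,
    one_apply_eq_self]

lemma det_toEuclideanCLM_sqrt_inv (hA : A.PosDef) :
    (toEuclideanCLM (𝕜 := ℝ) (CFC.sqrt A⁻¹)).det = (√A.det)⁻¹ := by
  rw [det_toEuclideanCLM, hA.inv.posSemidef.det_sqrt, RCLike.sqrt_real, det_nonsing_inv,
    Ring.inverse_eq_inv', Real.sqrt_inv]

lemma tendsto_sqrt_quadForm_nhdsNE_zero (hA : A.PosDef) :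
    Tendsto (fun h => √(quadForm A h)) (𝓝[≠] 0) (𝓝[>] 0) := by
  refine tendsto_nhdsWithin_iff.2 ⟨?_, ?_⟩
  · have := (continuous_quadForm A).sqrt.tendsto 0
    rw [quadForm_eq_inner, inner_zero_left, Real.sqrt_zero] at this
    exact this.mono_left nhdsWithin_le_nhds
  · filter_upwards [self_mem_nhdsWithin] with h hh
    exact Real.sqrt_pos.2 (quadForm_pos hA hh)

end QuadForm

section EllipticalDensity

variable {d : ℕ} {φ f : ℝ → ℝ} {A A₁ A₂ : Matrix (Fin d) (Fin d) ℝ}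

/-- The spectral density of the geometrically anisotropic covariance `h ↦ φ (√(hᵀ A h))` when `f` is
the radial spectral density of `φ`: its level sets are the ellipsoids of `ωᵀ A⁻¹ ω`. -/
def ellipticalDensity (A : Matrix (Fin d) (Fin d) ℝ) (f : ℝ → ℝ) (ω : EuclideanSpace ℝ (Fin d)) :
    ℝ :=
  (√A.det)⁻¹ * f √(quadForm A⁻¹ ω)

lemma IsRadialSpectralDensity.hasSpectralDensity (hf : IsRadialSpectralDensity d φ f)
    (hA : A.PosDef) :
    HasSpectralDensity (fun h => φ √(quadForm A h)) (ellipticalDensity A f) := by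
  have hradial : HasSpectralDensity (fun h : EuclideanSpace ℝ (Fin d) => φ ‖h‖) fun ω => f ‖ω‖ :=
    ⟨hf.2.1, hf.2.2⟩
  change HasSpectralDensity _ fun ω => (√A.det)⁻¹ * f √(quadForm A⁻¹ ω)
  simpa only [norm_toEuclideanCLM_sqrt hA.posSemidef, norm_toEuclideanCLM_sqrt hA.inv.posSemidef,
    det_toEuclideanCLM_sqrt_inv hA, abs_inv, abs_of_nonneg (Real.sqrt_nonneg _)]
    using hradial.comp_of_inner_eq (inner_toEuclideanCLM_sqrt_inv hA)

lemma tendsto_ellipticalDensity_nhdsNE_zero (hA : A.PosDef) {l : ℝ}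
    (hl : Tendsto f (𝓝[>] 0) (𝓝 l)) :
    Tendsto (ellipticalDensity A f) (𝓝[≠] 0) (𝓝 ((√A.det)⁻¹ * l)) :=
  (hl.comp (tendsto_sqrt_quadForm_nhdsNE_zero hA.inv)).const_mul _

lemma exists_pos_tendsto_nhdsGT_of_antitoneOn (hf : AntitoneOn f (Set.Ici 0)) {u : ℝ}
    (hu : 0 < u) (hfu : 0 < f u) : ∃ l, 0 < l ∧ Tendsto f (𝓝[>] 0) (𝓝 l) := by
  have hbdd : BddAbove (f '' Set.Ioi 0) := by
    refine ⟨f 0, ?_⟩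
    rintro _ ⟨v, hv, rfl⟩
    exact hf Set.self_mem_Ici (Set.mem_Ioi.1 hv).le (Set.mem_Ioi.1 hv).le
  exact ⟨sSup (f '' Set.Ioi 0), hfu.trans_le (le_csSup hbdd ⟨u, hu, rfl⟩),
    (hf.mono Set.Ioi_subset_Ici_self).tendsto_nhdsGT hbdd⟩

lemma ellipticalDensity_mul_le (hf : ∀ u, 0 ≤ u → 0 ≤ f u) (hfmono : AntitoneOn f (Set.Ici 0))
    (hA₁ : A₁.PosDef) (hA₂ : A₂.PosDef) (hA₁₂ : (A₁ - A₂).PosSemidef) {b₁ b₂ : ℝ} (hb₂ : 0 ≤ b₂)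
    (hb : b₂ * (√A₂.det)⁻¹ ≤ b₁ * (√A₁.det)⁻¹) (ω : EuclideanSpace ℝ (Fin d)) :
    b₂ * ellipticalDensity A₂ f ω ≤ b₁ * ellipticalDensity A₁ f ω := by
  have hquad : √(quadForm A₁⁻¹ ω) ≤ √(quadForm A₂⁻¹ ω) :=
    Real.sqrt_le_sqrt (quadForm_le_quadForm (posSemidef_inv_sub_inv hA₁ hA₂ hA₁₂) ω)
  simp only [ellipticalDensity, ← mul_assoc]
  exact mul_le_mul hb (hfmono (Real.sqrt_nonneg _) (Real.sqrt_nonneg _) hquad)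
    (hf _ (Real.sqrt_nonneg _)) ((by positivity : 0 ≤ b₂ * (√A₂.det)⁻¹).trans hb)

end EllipticalDensity

lemma mul_sqrt_div_le_iff {x y : ℝ} (hx : 0 < x) (a b : ℝ) :
    b * √(x / y) ≤ a ↔ b * (√y)⁻¹ ≤ a * (√x)⁻¹ := by
  rw [Real.sqrt_div hx.le, div_eq_mul_inv, mul_left_comm, mul_comm, ← div_eq_mul_inv a,
    le_div_iff₀ (Real.sqrt_pos.2 hx)]

theorem statement_1_general (d : ℕ) (hd : 1 ≤ d) (φ f : ℝ → ℝ)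
    (hf : IsRadialSpectralDensity d φ f)
    (hfpos : ∃ u : ℝ, 0 < u ∧ 0 < f u) (hfmono : AntitoneOn f (Set.Ici 0))
    (A₁ A₂ : Matrix (Fin d) (Fin d) ℝ) (hA₁ : A₁.PosDef) (hA₂ : A₂.PosDef)
    (hA₁₂ : (A₁ - A₂).PosSemidef)
    (b₁ b₂ : ℝ) (hb₂ : 0 ≤ b₂) :
    IsStationaryCovariance d
      (fun h => b₁ * φ (Real.sqrt (quadForm A₁ h)) - b₂ * φ (Real.sqrt (quadForm A₂ h))) ↔
    b₂ * Real.sqrt (A₁.det / A₂.det) ≤ b₁ := by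
  have hdensity := ((hf.hasSpectralDensity hA₁).const_mul b₁).sub
    ((hf.hasSpectralDensity hA₂).const_mul b₂)
  rw [mul_sqrt_div_le_iff hA₁.det_pos]
  constructor
  · intro hpsd
    have : NeZero d := ⟨by lia⟩
    obtain ⟨u, hu, hfu⟩ := hfpos
    obtain ⟨l, hl, hlim⟩ := exists_pos_tendsto_nhdsGT_of_antitoneOn hfmono hu hfu
    have hnonneg := hpsd.nonneg_of_tendsto_nhdsNE_zero hdensity
      (((tendsto_ellipticalDensity_nhdsNE_zero hA₁ hlim).const_mul b₁).sub
        ((tendsto_ellipticalDensity_nhdsNE_zero hA₂ hlim).const_mul b₂))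
    rw [← mul_assoc, ← mul_assoc, ← sub_mul] at hnonneg
    exact sub_nonneg.1 (nonneg_of_mul_nonneg_left hnonneg hl)
  · exact fun hb => hdensity.isStationaryCovariance fun ω =>
      sub_nonneg.2 (ellipticalDensity_mul_le hf.1 hfmono hA₁ hA₂ hA₁₂ hb₂ hb ω)

theorem statement_1 (d : ℕ) (hd : 1 ≤ d) (φ f : ℝ → ℝ)
    (hφ : MemPhi d φ) (hf : IsRadialSpectralDensity d φ f)
    (hfpos : ∀ u : ℝ, 0 ≤ u → 0 < f u) (hfmono : AntitoneOn f (Set.Ici 0))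
    (A₁ A₂ : Matrix (Fin d) (Fin d) ℝ) (hA₁ : A₁.PosDef) (hA₂ : A₂.PosDef)
    (hA₁₂ : (A₁ - A₂).PosSemidef)
    (b₁ b₂ : ℝ) (hb₁ : 0 ≤ b₁) (hb₂ : 0 ≤ b₂) :
    IsStationaryCovariance d
      (fun h => b₁ * φ (Real.sqrt (quadForm A₁ h)) - b₂ * φ (Real.sqrt (quadForm A₂ h))) ↔
    b₂ * Real.sqrt (A₁.det / A₂.det) ≤ b₁ := by
  exact statement_1_general d hd φ f hf ⟨1, one_pos, hfpos 1 zero_le_one⟩ hfmono A₁ A₂ hA₁ hA₂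
    hA₁₂ b₁ b₂ hb₂
end
end

section
/- Let d ∈ {1, 2, 3}. Let a₁, a₂ > 0 and b₁, b₂ ≥ 0 be constants and u a unit vector in ℝ^d. Define W(t) = sin(t)/t for t > 0 and W(0) = 1, with W'(t) = (t cos t − sin t)/t² and W''(t) = (−t² sin t − 2t cos t + 2 sin t)/t³ for t > 0 and W''(0) = −1/3. Then the function T : ℝ^d → ℝ defined by T(h) = b₁ W(√a₁ ‖h‖) − b₂ [ cos²θ(h,u) · W''(√a₂ ‖h‖) + sin²θ(h,u) · W'(√a₂ ‖h‖)/(√a₂ ‖h‖) ] for h ≠ 0, and T(0) = b₁ + b₂/3, is a stationary covariance function on ℝ^d. -/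
open MeasureTheory
open scoped BigOperators RealInnerProductSpace

noncomputable section

/-!
In dimension three, `sinc ‖h‖` is up to normalization the Fourier transform of the uniform measure
on the unit sphere. That measure is the limit of thin shells `1 ≤ ‖y‖ < R` as `R ↓ 1`, and the
transform of every shell is an integral of the positive semidefinite functions `h ↦ cos ⟪h, y⟫`;
slicing the balls orthogonally to `h` evaluates the limit. Hence `sinc ‖h‖` is positive semidefinite
in dimension at most three.

If `C` is positive semidefinite, then so is the second difference `2 C h - C (h + w) - C (h - w)`,
which is the covariance of the increments `Z (x + w) - Z x` of a field `Z` with covariance `C`.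
Dividing by `t ^ 2` with `w = t • u` and letting `t → 0` shows that `-∂_u² C` is positive
semidefinite. For `C = sinc ‖·‖`, `∂_u² C` is the bracket multiplied by `-b₂` in the definition
of `T`.
-/

open Filter Topology Metric Module

/-- A real function `C` on an additive group is positive semidefinite if every matrix
`C (x i - x j)` has a nonnegative quadratic form. The points are indexed by arbitrary finite types,
rather than by `Fin n` as in `IsStationaryCovariance`, so that families can be joined by `⊕`. -/
def IsPosSemidefFun {G : Type*} [AddCommGroup G] (C : G → ℝ) : Prop :=
  ∀ ⦃ι : Type⦄ [Fintype ι] (x : ι → G) (v : ι → ℝ), 0 ≤ ∑ i, ∑ j, v i * v j * C (x i - x j)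

namespace IsPosSemidefFun

variable {G : Type*} [AddCommGroup G] {C C₁ C₂ : G → ℝ}

theorem add (h₁ : IsPosSemidefFun C₁) (h₂ : IsPosSemidefFun C₂) :
    IsPosSemidefFun fun h ↦ C₁ h + C₂ h := by
  intro ι _ x v
  simpa only [mul_add, Finset.sum_add_distrib] using add_nonneg (h₁ x v) (h₂ x v)

theorem const_mul {c : ℝ} (hc : 0 ≤ c) (hC : IsPosSemidefFun C) :
    IsPosSemidefFun fun h ↦ c * C h := by
  intro ι _ x v
  simpa only [Finset.mul_sum, mul_left_comm c] using mul_nonneg hc (hC x v)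

theorem comp_addMonoidHom {H : Type*} [AddCommGroup H] (hC : IsPosSemidefFun C) (φ : H →+ G) :
    IsPosSemidefFun fun h ↦ C (φ h) := by
  intro ι _ x v
  simpa only [map_sub] using hC (fun i ↦ φ (x i)) v

theorem of_tendsto {α : Type*} {l : Filter α} [l.NeBot] {F : α → G → ℝ}
    (hF : ∀ᶠ a in l, IsPosSemidefFun (F a)) (hlim : ∀ h, Tendsto (F · h) l (𝓝 (C h))) :
    IsPosSemidefFun C := by
  intro ι _ x v
  have hsum : Tendsto (fun a ↦ ∑ i, ∑ j, v i * v j * F a (x i - x j)) l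
      (𝓝 (∑ i, ∑ j, v i * v j * C (x i - x j))) :=
    tendsto_finsetSum _ fun i _ ↦ tendsto_finsetSum _ fun j _ ↦ (hlim _).const_mul _
  exact ge_of_tendsto hsum (hF.mono fun a ha ↦ ha x v)

theorem integral {Ω : Type*} [MeasurableSpace Ω] {μ : Measure Ω} {F : Ω → G → ℝ}
    (hF : ∀ ω, IsPosSemidefFun (F ω)) (hint : ∀ h, Integrable (F · h) μ) :
    IsPosSemidefFun fun h ↦ ∫ ω, F ω h ∂μ := by
  intro ι _ x v
  have hsum : ∑ i, ∑ j, v i * v j * ∫ ω, F ω (x i - x j) ∂μ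
      = ∫ ω, ∑ i, ∑ j, v i * v j * F ω (x i - x j) ∂μ := by
    have hij i j := (hint (x i - x j)).const_mul (v i * v j)
    simp only [integral_finsetSum _ fun i _ ↦ integrable_finsetSum _ fun j _ ↦ hij i j,
      integral_finsetSum _ fun j _ ↦ hij _ j, integral_const_mul]
  rw [hsum]
  exact integral_nonneg fun ω ↦ hF ω x v

theorem second_difference (hC : IsPosSemidefFun C) (w : G) :
    IsPosSemidefFun fun h ↦ 2 * C h - C (h + w) - C (h - w) := by
  intro ι _ x v
  refine (hC (Sum.elim x fun i ↦ x i + w) (Sum.elim v fun i ↦ -v i)).trans_eq ?_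
  simp only [Fintype.sum_sum_type, Sum.elim_inl, Sum.elim_inr, ← Finset.sum_add_distrib]
  refine Finset.sum_congr rfl fun i _ ↦ Finset.sum_congr rfl fun j _ ↦ ?_
  rw [← sub_sub, add_sub_right_comm, add_sub_add_right_eq_sub]
  ring

end IsPosSemidefFun

theorem isPosSemidefFun_cos : IsPosSemidefFun Real.cos := by
  intro ι _ x v
  have hsq : ∑ i, ∑ j, v i * v j * Real.cos (x i - x j)
      = (∑ i, v i * Real.cos (x i)) ^ 2 + (∑ i, v i * Real.sin (x i)) ^ 2 := by
    simp only [sq, Finset.sum_mul_sum, ← Finset.sum_add_distrib, Real.cos_sub]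
    refine Finset.sum_congr rfl fun i _ ↦ Finset.sum_congr rfl fun j _ ↦ ?_
    ring
  rw [hsq]
  positivity

section Ball

variable {E F : Type*}
  [NormedAddCommGroup E] [InnerProductSpace ℝ E] [FiniteDimensional ℝ E]
  [MeasurableSpace E] [BorelSpace E]
  [NormedAddCommGroup F] [InnerProductSpace ℝ F] [FiniteDimensional ℝ F]
  [MeasurableSpace F] [BorelSpace F]

theorem integrableOn_cos_inner {μ : Measure E} {s : Set E} (hs : μ s < ⊤) (h : E) :
    IntegrableOn (fun y ↦ Real.cos ⟪h, y⟫) s μ :=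
  Measure.integrableOn_of_bounded hs.ne (by fun_prop) (.of_forall fun _ ↦ Real.abs_cos_le_one _)

theorem isPosSemidefFun_setIntegral_cos_inner {μ : Measure E} {s : Set E} (hs : μ s < ⊤) :
    IsPosSemidefFun fun h : E ↦ ∫ y in s, Real.cos ⟪h, y⟫ ∂μ :=
  .integral (fun y ↦ isPosSemidefFun_cos.comp_addMonoidHom ((innerₗ E).flip y : E →+ ℝ))
    (integrableOn_cos_inner hs)

theorem setIntegral_ball_comp_inner_of_norm_eq (g : ℝ → ℝ) {h w : E} (hw : ‖h‖ = ‖w‖) (R : ℝ) :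
    ∫ y in ball (0 : E) R, g ⟪h, y⟫ = ∫ y in ball (0 : E) R, g ⟪w, y⟫ := by
  set ρ := (Submodule.span ℝ {h - w})ᗮ.reflection
  have hρ : ρ h = w := Submodule.reflection_sub hw
  have hinv := ρ.measurePreserving.setIntegral_preimage_emb
    ρ.toHomeomorph.measurableEmbedding (fun y ↦ g ⟪w, y⟫) (ball 0 R)
  have hball : ρ ⁻¹' ball 0 R = ball (0 : E) R := by simp
  simpa only [hball, ← hρ, ρ.inner_map_map] using hinv

theorem setIntegral_ball_comp_fst {R : ℝ} (hR : 0 ≤ R) {g : E → ℝ}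
    (hg : IntegrableOn (fun y : WithLp 2 (E × F) ↦ g y.fst) (ball 0 R)) :
    ∫ y in ball (0 : WithLp 2 (E × F)) R, g y.fst
      = ∫ z : E, volume.real (ball (0 : F) √(R ^ 2 - ‖z‖ ^ 2)) * g z := by
  set S : Set (E × F) := {p | p.2 ∈ ball (0 : F) √(R ^ 2 - ‖p.1‖ ^ 2)} with hS
  have hSm : MeasurableSet S := by
    simp only [hS, mem_ball_zero_iff]
    exact measurableSet_lt (by fun_prop) (by fun_prop)
  have hpre : @WithLp.ofLp 2 (E × F) ⁻¹' S = ball 0 R := by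
    ext y
    simp only [hS, Set.mem_preimage, Set.mem_ofPred_eq, mem_ball_zero_iff,
      Real.lt_sqrt (norm_nonneg _), ← sq_lt_sq₀ (norm_nonneg y) hR, WithLp.prod_norm_sq_eq_of_L2]
    exact lt_sub_iff_add_lt'
  have hemb : MeasurableEmbedding (@WithLp.ofLp 2 (E × F)) :=
    (MeasurableEquiv.toLp 2 (E × F)).symm.measurableEmbedding
  have hpres := WithLp.volume_preserving_ofLp E F
  have hint : Integrable (S.indicator fun p ↦ g p.1) (volume.prod volume) := by
    rw [integrable_indicator_iff hSm, ← Measure.volume_eq_prod,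
      ← hpres.integrableOn_comp_preimage hemb, hpre]
    exact hg
  calc ∫ y in ball (0 : WithLp 2 (E × F)) R, g y.fst
      = ∫ p in S, g p.1 := by
        rw [← hpre]
        exact hpres.setIntegral_preimage_emb hemb (fun p ↦ g p.1) S
    _ = ∫ z, ∫ c, S.indicator (fun p ↦ g p.1) (z, c) := by
        rw [← integral_indicator hSm, Measure.volume_eq_prod, integral_prod _ hint]
    _ = ∫ z : E, volume.real (ball (0 : F) √(R ^ 2 - ‖z‖ ^ 2)) * g z :=
        integral_congr_ae (.of_forall fun z ↦ integral_indicator_const (g z)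
          (s := ball (0 : F) √(R ^ 2 - ‖z‖ ^ 2)) measurableSet_ball)

end Ball

theorem setIntegral_ball_comp_fst_real_complex {R : ℝ} (hR : 0 ≤ R) {g : ℝ → ℝ}
    (hg : IntegrableOn (fun y : WithLp 2 (ℝ × ℂ) ↦ g y.fst) (ball 0 R)) :
    ∫ y in ball (0 : WithLp 2 (ℝ × ℂ)) R, g y.fst
      = Real.pi * ∫ z in (-R)..R, g z * (R ^ 2 - z ^ 2) := by
  have hslice (z : ℝ) : volume.real (ball (0 : ℂ) √(R ^ 2 - ‖z‖ ^ 2)) * g z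
      = (Set.Ioc (-R) R).indicator (fun z ↦ Real.pi * (g z * (R ^ 2 - z ^ 2))) z := by
    have harea : volume.real (ball (0 : ℂ) √(R ^ 2 - ‖z‖ ^ 2))
        = Real.pi * √(R ^ 2 - z ^ 2) ^ 2 := by
      simp [measureReal_def, Complex.volume_ball, mul_comm]
    rw [harea]
    by_cases hz : z ∈ Set.Ioc (-R) R
    · rw [Set.indicator_of_mem hz, Real.sq_sqrt (by nlinarith [hz.1, hz.2])]
      ring
    · have hneg : R ^ 2 - z ^ 2 ≤ 0 := by
        rw [Set.mem_Ioc, not_and_or, not_lt, not_le] at hz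
        rcases hz with hz | hz <;> nlinarith
      simp [Set.indicator_of_notMem hz, Real.sqrt_eq_zero_of_nonpos hneg]
  rw [setIntegral_ball_comp_fst hR hg, integral_congr_ae (.of_forall hslice),
    integral_indicator measurableSet_Ioc, integral_const_mul,
    intervalIntegral.integral_of_le (by linarith)]

theorem setIntegral_ball_cos_inner (h : WithLp 2 (ℝ × ℂ)) {R : ℝ} (hR : 0 ≤ R) :
    ∫ y in ball (0 : WithLp 2 (ℝ × ℂ)) R, Real.cos ⟪h, y⟫
      = Real.pi * ∫ z in (-R)..R, Real.cos (‖h‖ * z) * (R ^ 2 - z ^ 2) := by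
  set w : WithLp 2 (ℝ × ℂ) := .toLp 2 (‖h‖, 0) with hw
  have hnorm : ‖h‖ = ‖w‖ := by simp [hw]
  have hinner (y : WithLp 2 (ℝ × ℂ)) : ⟪w, y⟫ = ‖h‖ * y.fst := by
    simp [hw, WithLp.prod_inner_apply, mul_comm]
  have hint := integrableOn_cos_inner (measure_ball_lt_top (μ := volume) (x := 0) (r := R)) w
  rw [setIntegral_ball_comp_inner_of_norm_eq Real.cos hnorm]
  simp only [hinner] at hint ⊢
  exact setIntegral_ball_comp_fst_real_complex hR (g := fun z ↦ Real.cos (‖h‖ * z)) hint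

theorem hasDerivAt_integral_neg_self {f : ℝ → ℝ} (hf : Continuous f) (R : ℝ) :
    HasDerivAt (fun R ↦ ∫ z in (-R)..R, f z) (f R + f (-R)) R := by
  have hprim (x : ℝ) : HasDerivAt (fun x ↦ ∫ z in (0 : ℝ)..x, f z) (f x) x :=
    hf.integral_hasStrictDerivAt 0 x |>.hasDerivAt
  have hsub := (hprim R).sub ((hprim (-R)).comp R (hasDerivAt_neg R))
  refine (hsub.congr_deriv (by ring)).congr_of_eventuallyEq (.of_forall fun x ↦ ?_)
  exact (intervalIntegral.integral_interval_sub_left (hf.intervalIntegrable _ _)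
    (hf.intervalIntegrable _ _)).symm

theorem hasDerivAt_integral_mul_sq_sub_sq {f : ℝ → ℝ} (hf : Continuous f) (R : ℝ) :
    HasDerivAt (fun R ↦ ∫ z in (-R)..R, f z * (R ^ 2 - z ^ 2)) (2 * R * ∫ z in (-R)..R, f z) R := by
  have hsplit (R : ℝ) : ∫ z in (-R)..R, f z * (R ^ 2 - z ^ 2)
      = R ^ 2 * (∫ z in (-R)..R, f z) - ∫ z in (-R)..R, f z * z ^ 2 := by
    rw [← intervalIntegral.integral_const_mul, ← intervalIntegral.integral_sub
      ((by fun_prop : Continuous _).intervalIntegrable _ _)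
      ((by fun_prop : Continuous _).intervalIntegrable _ _)]
    congr! 2
    ring
  simp only [hsplit]
  refine (((hasDerivAt_pow 2 R).mul (hasDerivAt_integral_neg_self hf R)).sub
    (hasDerivAt_integral_neg_self (hf.mul (continuous_pow 2)) R)).congr_deriv ?_
  simp
  ring

theorem integral_cos_mul_eq_sinc (s R : ℝ) :
    ∫ z in (-R)..R, Real.cos (s * z) = 2 * R * Real.sinc (s * R) := by
  rcases eq_or_ne s 0 with rfl | hs
  · simp
    ring
  rcases eq_or_ne R 0 with rfl | hR
  · simp
  rw [intervalIntegral.integral_comp_mul_left _ hs, integral_cos,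
    Real.sinc_of_ne_zero (mul_ne_zero hs hR), mul_neg, Real.sin_neg, smul_eq_mul]
  field_simp
  ring

theorem hasDerivAt_setIntegral_ball_cos_inner (h : WithLp 2 (ℝ × ℂ)) {R : ℝ} (hR : 0 < R) :
    HasDerivAt (fun R ↦ ∫ y in ball (0 : WithLp 2 (ℝ × ℂ)) R, Real.cos ⟪h, y⟫)
      (4 * Real.pi * R ^ 2 * Real.sinc (‖h‖ * R)) R := by
  have hslices := (hasDerivAt_integral_mul_sq_sub_sq (f := fun z ↦ Real.cos (‖h‖ * z))
    (by fun_prop) R).const_mul Real.pi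
  rw [integral_cos_mul_eq_sinc] at hslices
  refine (hslices.congr_deriv (by ring)).congr_of_eventuallyEq ?_
  filter_upwards [lt_mem_nhds hR] with r hr
  exact setIntegral_ball_cos_inner h hr.le

theorem isPosSemidefFun_slope_setIntegral_ball_cos_inner {E : Type*} [NormedAddCommGroup E]
    [InnerProductSpace ℝ E] [FiniteDimensional ℝ E] [MeasurableSpace E] [BorelSpace E]
    {r R : ℝ} (hrR : r ≤ R) :
    IsPosSemidefFun fun h : E ↦ slope (fun R ↦ ∫ y in ball (0 : E) R, Real.cos ⟪h, y⟫) r R := by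
  have hfin : volume (ball (0 : E) R \ ball 0 r) < ⊤ :=
    (measure_mono Set.sdiff_subset).trans_lt measure_ball_lt_top
  convert (isPosSemidefFun_setIntegral_cos_inner hfin).const_mul
    (inv_nonneg.2 (sub_nonneg.2 hrR)) using 2 with k
  rw [slope_def_module, setIntegral_sdiff measurableSet_ball
    (integrableOn_cos_inner measure_ball_lt_top k) (ball_subset_ball hrR), smul_eq_mul]

theorem isPosSemidefFun_sinc_norm_prod :
    IsPosSemidefFun fun h : WithLp 2 (ℝ × ℂ) ↦ Real.sinc ‖h‖ := by
  have hsphere : IsPosSemidefFun fun h : WithLp 2 (ℝ × ℂ) ↦ 4 * Real.pi * Real.sinc ‖h‖ := by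
    refine .of_tendsto (l := 𝓝[>] (1 : ℝ))
      (F := fun R h ↦ slope (fun R ↦ ∫ y in ball 0 R, Real.cos ⟪h, y⟫) 1 R) ?_ fun h ↦ ?_
    · filter_upwards [self_mem_nhdsWithin] with R hR
      exact isPosSemidefFun_slope_setIntegral_ball_cos_inner (le_of_lt hR)
    · have hderiv := hasDerivAt_setIntegral_ball_cos_inner h one_pos
      simp only [one_pow, mul_one] at hderiv
      exact hderiv.tendsto_slope.mono_left (nhdsGT_le_nhdsNE 1)
  have hpi : 0 < 4 * Real.pi := by positivity
  simpa only [inv_mul_cancel_left₀ hpi.ne'] using hsphere.const_mul (inv_nonneg.2 hpi.le)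

section InnerProductSpace

variable {E F : Type*} [NormedAddCommGroup E] [InnerProductSpace ℝ E]
  [NormedAddCommGroup F] [InnerProductSpace ℝ F]

theorem exists_linearIsometry_of_finrank_le [FiniteDimensional ℝ E] [FiniteDimensional ℝ F]
    (h : finrank ℝ E ≤ finrank ℝ F) : Nonempty (E →ₗᵢ[ℝ] F) := by
  set b := stdOrthonormalBasis ℝ E
  set c := stdOrthonormalBasis ℝ F
  have hmap : b.toBasis.constr ℝ (c ∘ Fin.castLE h) ∘ b.toBasis = c ∘ Fin.castLE h :=
    funext (b.toBasis.constr_basis ℝ _)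
  refine ⟨(b.toBasis.constr ℝ (c ∘ Fin.castLE h)).isometryOfOrthonormal (v := b.toBasis) ?_ ?_⟩
  · simp [b.orthonormal]
  · rw [hmap]
    exact c.orthonormal.comp _ (Fin.castLE_injective h)

theorem isPosSemidefFun_sinc_norm [FiniteDimensional ℝ E] (hE : finrank ℝ E ≤ 3) :
    IsPosSemidefFun fun h : E ↦ Real.sinc ‖h‖ := by
  have hdim : finrank ℝ (WithLp 2 (ℝ × ℂ)) = 3 := by
    simp [(WithLp.linearEquiv 2 ℝ (ℝ × ℂ)).finrank_eq, Complex.finrank_real_complex]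
  obtain ⟨L⟩ := exists_linearIsometry_of_finrank_le (hE.trans_eq hdim.symm)
  simpa using isPosSemidefFun_sinc_norm_prod.comp_addMonoidHom (L.toLinearMap : E →+ _)

theorem hasDerivAt_norm_add_smul {h u : E} {t : ℝ} (ht : h + t • u ≠ 0) :
    HasDerivAt (fun t : ℝ ↦ ‖h + t • u‖) (⟪h + t • u, u⟫ / ‖h + t • u‖) t := by
  have hline : HasDerivAt (fun t : ℝ ↦ h + t • u) u t := by
    simpa using ((hasDerivAt_id t).smul_const u).const_add h
  have hsqrt := hline.norm_sq.sqrt (by simpa using ht)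
  simp only [Real.sqrt_sq (norm_nonneg _)] at hsqrt
  exact hsqrt.congr_deriv (mul_div_mul_left _ _ two_ne_zero)

theorem hasDerivAt_comp_norm_mul_inner_div {h u : E} (hh : h ≠ 0) {g : ℝ → ℝ} {g' : ℝ}
    (hg : HasDerivAt g g' ‖h‖) :
    HasDerivAt (fun t : ℝ ↦ g ‖h + t • u‖ * (⟪h + t • u, u⟫ / ‖h + t • u‖))
      ((⟪h, u⟫ / ‖h‖) ^ 2 * g' + (‖u‖ ^ 2 - (⟪h, u⟫ / ‖h‖) ^ 2) * (g ‖h‖ / ‖h‖)) 0 := by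
  have hr : HasDerivAt (fun t : ℝ ↦ ‖h + t • u‖) (⟪h, u⟫ / ‖h‖) 0 := by
    simpa using hasDerivAt_norm_add_smul (h := h) (u := u) (t := 0) (by simpa using hh)
  have hp : HasDerivAt (fun t : ℝ ↦ ⟪h + t • u, u⟫) (‖u‖ ^ 2) 0 := by
    simpa [inner_add_left, real_inner_smul_left] using
      ((hasDerivAt_id (0 : ℝ)).mul_const (‖u‖ ^ 2)).const_add ⟪h, u⟫
  have hg₀ : HasDerivAt g g' ‖h + (0 : ℝ) • u‖ := by simpa using hg
  have hn : ‖h‖ ≠ 0 := norm_ne_zero_iff.2 hh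
  refine ((hg₀.comp 0 hr).mul (hp.div hr (by simpa using hn))).congr_deriv ?_
  simp only [Function.comp_apply, Pi.div_apply, zero_smul, add_zero]
  field_simp

theorem tendsto_second_difference_div_sq {g g' : ℝ → ℝ} {g'' x : ℝ}
    (hg : ∀ᶠ t in 𝓝 x, HasDerivAt g (g' t) t) (hg' : HasDerivAt g' g'' x) :
    Tendsto (fun t ↦ (2 * g x - g (x + t) - g (x - t)) / t ^ 2) (𝓝[≠] 0) (𝓝 (-g'')) := by
  have hadd : Tendsto (fun t ↦ x + t) (𝓝 0) (𝓝 x) := by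
    simpa using (continuous_const_add x).tendsto 0
  have hsub : Tendsto (fun t ↦ x - t) (𝓝 0) (𝓝 x) := by
    simpa using (continuous_sub_left x).tendsto 0
  have hgx : Tendsto g (𝓝 x) (𝓝 (g x)) := hg.self_of_nhds.continuousAt
  refine HasDerivAt.lhopital_zero_nhdsNE (f' := fun t ↦ g' (x - t) - g' (x + t))
    (g' := fun t ↦ 2 * t) ?_ ?_ ?_ ?_ ?_ ?_
  · refine eventually_nhdsWithin_of_eventually_nhds ?_
    filter_upwards [hadd.eventually hg, hsub.eventually hg] with t hp hm
    refine (((hp.comp_const_add x t).const_sub (2 * g x)).sub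
      (hm.comp_const_sub x t)).congr_deriv ?_
    ring
  · exact .of_forall fun t ↦ by simpa using hasDerivAt_pow 2 t
  · filter_upwards [self_mem_nhdsWithin] with t ht
    exact mul_ne_zero two_ne_zero ht
  · refine tendsto_nhdsWithin_of_tendsto_nhds ?_
    have hnum := ((hgx.comp hadd).const_sub (2 * g x)).sub (hgx.comp hsub)
    rwa [two_mul, add_sub_cancel_right, sub_self, ← two_mul] at hnum
  · exact tendsto_nhdsWithin_of_tendsto_nhds (by simpa using (continuous_pow 2).tendsto (0 : ℝ))
  · have hslope : HasDerivAt (fun t ↦ g' (x - t) - g' (x + t)) (-g'' - g'') 0 :=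
      (HasDerivAt.comp_const_sub x 0 (by simpa using hg')).sub
        (HasDerivAt.comp_const_add x 0 (by simpa using hg'))
    convert hslope.tendsto_slope.div_const 2 using 2 with t
    · simp only [slope_def_field, sub_zero, add_zero, sub_self]
      rw [div_div, mul_comm]
    · ring

/-- Minus the second derivative, along the unit vector `u`, of the radial function `f ∘ ‖·‖`, where
`f'` and `f''` are the derivatives of `f` on `(0, ∞)`; here `⟪h, u⟫ / ‖h‖` is the cosine of
the angle between `h` and `u`. At the origin, where there is no angle, the value is `-f'' 0`. -/
def negRadialSecondDeriv (f' f'' : ℝ → ℝ) (u h : E) : ℝ :=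
  open Classical in
  if h = 0 then -f'' 0
  else -((⟪h, u⟫ / ‖h‖) ^ 2 * f'' ‖h‖ + (1 - (⟪h, u⟫ / ‖h‖) ^ 2) * (f' ‖h‖ / ‖h‖))

theorem negRadialSecondDeriv_zero (f' f'' : ℝ → ℝ) (u : E) :
    negRadialSecondDeriv f' f'' u 0 = -f'' 0 :=
  if_pos rfl

theorem negRadialSecondDeriv_of_ne_zero (f' f'' : ℝ → ℝ) (u : E) {h : E} (hh : h ≠ 0) :
    negRadialSecondDeriv f' f'' u h
      = -((⟪h, u⟫ / ‖h‖) ^ 2 * f'' ‖h‖ + (1 - (⟪h, u⟫ / ‖h‖) ^ 2) * (f' ‖h‖ / ‖h‖)) :=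
  if_neg hh

theorem negRadialSecondDeriv_smul (f' f'' : ℝ → ℝ) (u : E) {h : E} (hh : h ≠ 0)
    {c : ℝ} (hc : 0 < c) :
    negRadialSecondDeriv f' f'' u (c • h)
      = -((⟪h, u⟫ / ‖h‖) ^ 2 * f'' (c * ‖h‖)
          + (1 - (⟪h, u⟫ / ‖h‖) ^ 2) * (f' (c * ‖h‖) / (c * ‖h‖))) := by
  rw [negRadialSecondDeriv_of_ne_zero _ _ _ (smul_ne_zero hc.ne' hh), norm_smul,
    Real.norm_of_nonneg hc.le, real_inner_smul_left, mul_div_mul_left _ _ hc.ne']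

theorem tendsto_second_difference_radial {f f' f'' : ℝ → ℝ} {u : E} (hu : ‖u‖ = 1)
    (hf : ∀ r, 0 < r → HasDerivAt f (f' r) r) (hf' : ∀ r, 0 < r → HasDerivAt f' (f'' r) r)
    (hf₀ : Tendsto (fun t ↦ 2 * (f 0 - f t) / t ^ 2) (𝓝[>] 0) (𝓝 (-f'' 0))) (h : E) :
    Tendsto (fun t : ℝ ↦ (2 * f ‖h‖ - f ‖h + t • u‖ - f ‖h - t • u‖) / t ^ 2) (𝓝[>] 0)
      (𝓝 (negRadialSecondDeriv f' f'' u h)) := by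
  rcases eq_or_ne h 0 with rfl | hh
  · rw [negRadialSecondDeriv_zero]
    refine hf₀.congr' ?_
    filter_upwards [self_mem_nhdsWithin] with t ht
    rw [zero_add, zero_sub, norm_neg, norm_smul, hu, mul_one, norm_zero,
      Real.norm_of_nonneg (le_of_lt ht)]
    ring
  · have hne : ∀ᶠ t : ℝ in 𝓝 0, h + t • u ≠ 0 :=
      (by fun_prop : ContinuousAt (fun t : ℝ ↦ h + t • u) 0).eventually_ne (by simpa using hh)
    have hg : ∀ᶠ t : ℝ in 𝓝 0, HasDerivAt (fun t : ℝ ↦ f ‖h + t • u‖)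
        (f' ‖h + t • u‖ * (⟪h + t • u, u⟫ / ‖h + t • u‖)) t :=
      hne.mono fun t ht ↦ (hf _ (norm_pos_iff.2 ht)).comp t (hasDerivAt_norm_add_smul ht)
    have hg' := hasDerivAt_comp_norm_mul_inner_div (u := u) hh (hf' _ (norm_pos_iff.2 hh))
    have hlim := tendsto_second_difference_div_sq hg hg'
    rw [negRadialSecondDeriv_of_ne_zero _ _ _ hh]
    simpa [hu, sub_eq_add_neg] using hlim.mono_left (nhdsGT_le_nhdsNE 0)

theorem IsPosSemidefFun.negRadialSecondDeriv {f f' f'' : ℝ → ℝ} {u : E}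
    (hC : IsPosSemidefFun fun h : E ↦ f ‖h‖) (hu : ‖u‖ = 1)
    (hf : ∀ r, 0 < r → HasDerivAt f (f' r) r) (hf' : ∀ r, 0 < r → HasDerivAt f' (f'' r) r)
    (hf₀ : Tendsto (fun t ↦ 2 * (f 0 - f t) / t ^ 2) (𝓝[>] 0) (𝓝 (-f'' 0))) :
    IsPosSemidefFun (negRadialSecondDeriv f' f'' u) := by
  refine .of_tendsto (.of_forall fun t ↦ ?_) (tendsto_second_difference_radial hu hf hf' hf₀)
  simpa only [inv_mul_eq_div] using
    (hC.second_difference (t • u)).const_mul (inv_nonneg.2 (sq_nonneg t))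

end InnerProductSpace

theorem hasDerivAt_sinc {t : ℝ} (ht : t ≠ 0) :
    HasDerivAt Real.sinc ((t * Real.cos t - Real.sin t) / t ^ 2) t := by
  have hquot : HasDerivAt (fun t ↦ Real.sin t / t) ((t * Real.cos t - Real.sin t) / t ^ 2) t :=
    ((Real.hasDerivAt_sin t).div (hasDerivAt_id t) ht).congr_deriv (by simp [mul_comm])
  exact hquot.congr_of_eventuallyEq
    ((eventually_ne_nhds ht).mono fun _ hr ↦ Real.sinc_of_ne_zero hr)

theorem hasDerivAt_mul_cos_sub_sin_div_sq {t : ℝ} (ht : t ≠ 0) :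
    HasDerivAt (fun t ↦ (t * Real.cos t - Real.sin t) / t ^ 2)
      ((-(t ^ 2) * Real.sin t - 2 * t * Real.cos t + 2 * Real.sin t) / t ^ 3) t := by
  refine ((((hasDerivAt_id t).mul (Real.hasDerivAt_cos t)).sub (Real.hasDerivAt_sin t)).div
    (hasDerivAt_pow 2 t) (pow_ne_zero 2 ht)).congr_deriv ?_
  simp
  field_simp
  ring

theorem tendsto_two_mul_one_sub_sinc_div_sq :
    Tendsto (fun t ↦ 2 * (1 - Real.sinc t) / t ^ 2) (𝓝[≠] 0) (𝓝 (1 / 3)) := by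
  have hbound : Tendsto (fun t : ℝ ↦ t ^ 2 / 50) (𝓝[≠] 0) (𝓝 0) :=
    tendsto_nhdsWithin_of_tendsto_nhds
      (by simpa using (by fun_prop : Continuous fun t : ℝ ↦ t ^ 2 / 50).tendsto 0)
  have hsmall : ∀ᶠ t : ℝ in 𝓝[≠] 0, |t| ≤ 1 :=
    eventually_nhdsWithin_of_eventually_nhds
      ((continuous_abs.tendsto' (0 : ℝ) 0 abs_zero).eventually_le_const one_pos)
  refine tendsto_iff_norm_sub_tendsto_zero.2
    (squeeze_zero' (.of_forall fun t ↦ norm_nonneg _) ?_ hbound)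
  filter_upwards [self_mem_nhdsWithin, hsmall] with t (ht : t ≠ 0) ht₁
  have htaylor : 2 * (1 - Real.sinc t) / t ^ 2 - 1 / 3
      = -(2 / t ^ 3) * (Real.sin t - (t - t ^ 3 / 6)) := by
    rw [Real.sinc_of_ne_zero ht]
    field_simp
    ring
  rw [htaylor, Real.norm_eq_abs, abs_mul, abs_neg, abs_div, abs_pow, abs_two]
  calc 2 / |t| ^ 3 * |Real.sin t - (t - t ^ 3 / 6)|
      ≤ 2 / |t| ^ 3 * (|t| ^ 5 / 100) := by gcongr; exact Real.sin_bound ht₁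
    _ = |t| ^ 2 / 50 := by field_simp; ring
    _ = t ^ 2 / 50 := by rw [sq_abs]

theorem isPosSemidefFun_negRadialSecondDeriv_sinc {E : Type*} [NormedAddCommGroup E]
    [InnerProductSpace ℝ E] [FiniteDimensional ℝ E] (hE : finrank ℝ E ≤ 3)
    {u : E} (hu : ‖u‖ = 1) {W' W'' : ℝ → ℝ}
    (hW' : ∀ t, 0 < t → W' t = (t * Real.cos t - Real.sin t) / t ^ 2)
    (hW'' : ∀ t, 0 < t →
      W'' t = (-(t ^ 2) * Real.sin t - 2 * t * Real.cos t + 2 * Real.sin t) / t ^ 3)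
    (hW''0 : W'' 0 = -(1 / 3)) :
    IsPosSemidefFun (negRadialSecondDeriv W' W'' u) := by
  refine (isPosSemidefFun_sinc_norm hE).negRadialSecondDeriv hu (fun r hr ↦ ?_) (fun r hr ↦ ?_) ?_
  · rw [hW' r hr]
    exact hasDerivAt_sinc hr.ne'
  · rw [hW'' r hr]
    exact (hasDerivAt_mul_cos_sub_sin_div_sq hr.ne').congr_of_eventuallyEq
      ((eventually_gt_nhds hr).mono hW')
  · rw [hW''0, neg_neg, Real.sinc_zero]
    exact tendsto_two_mul_one_sub_sinc_div_sq.mono_left (nhdsGT_le_nhdsNE 0)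

theorem statement_14_general {E : Type*} [NormedAddCommGroup E] [InnerProductSpace ℝ E]
    [FiniteDimensional ℝ E] (hE : finrank ℝ E ≤ 3)
    {c₁ c₂ b₁ b₂ : ℝ} (hc₁ : 0 ≤ c₁) (hc₂ : 0 < c₂) (hb₁ : 0 ≤ b₁) (hb₂ : 0 ≤ b₂)
    {u : E} (hu : ‖u‖ = 1) {W W' W'' : ℝ → ℝ}
    (hW : ∀ t, 0 < t → W t = Real.sin t / t) (hW0 : W 0 = 1)
    (hW' : ∀ t, 0 < t → W' t = (t * Real.cos t - Real.sin t) / t ^ 2)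
    (hW'' : ∀ t, 0 < t →
      W'' t = (-(t ^ 2) * Real.sin t - 2 * t * Real.cos t + 2 * Real.sin t) / t ^ 3)
    (hW''0 : W'' 0 = -(1 / 3)) {T : E → ℝ} (hT0 : T 0 = b₁ + b₂ / 3)
    (hT : ∀ h, h ≠ 0 → T h = b₁ * W (c₁ * ‖h‖) - b₂ * ((⟪h, u⟫ / ‖h‖) ^ 2 * W'' (c₂ * ‖h‖) +
      (1 - (⟪h, u⟫ / ‖h‖) ^ 2) * (W' (c₂ * ‖h‖) / (c₂ * ‖h‖)))) :
    IsPosSemidefFun T := by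
  have hsinc (t : ℝ) (ht : 0 ≤ t) : W t = Real.sinc t := by
    rcases ht.eq_or_lt with rfl | ht
    · rw [hW0, Real.sinc_zero]
    · rw [hW t ht, Real.sinc_of_ne_zero ht.ne']
  have hdecomp (h : E) :
      T h = b₁ * Real.sinc ‖c₁ • h‖ + b₂ * negRadialSecondDeriv W' W'' u (c₂ • h) := by
    rcases eq_or_ne h 0 with rfl | hh
    · rw [hT0, smul_zero, smul_zero, norm_zero, Real.sinc_zero, negRadialSecondDeriv_zero, hW''0]
      ring
    · rw [hT h hh, hsinc _ (by positivity), negRadialSecondDeriv_smul _ _ _ hh hc₂, norm_smul,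
        Real.norm_of_nonneg hc₁]
      ring
  rw [funext hdecomp]
  have hiso := isPosSemidefFun_sinc_norm hE
  have haniso := isPosSemidefFun_negRadialSecondDeriv_sinc hE hu hW' hW'' hW''0
  exact ((hiso.comp_addMonoidHom (DistribSMul.toAddMonoidHom E c₁)).const_mul hb₁).add
    ((haniso.comp_addMonoidHom (DistribSMul.toAddMonoidHom E c₂)).const_mul hb₂)

theorem statement_14 (d : ℕ) (hd1 : 1 ≤ d) (hd3 : d ≤ 3)
    (a₁ a₂ b₁ b₂ : ℝ) (ha₁ : 0 < a₁) (ha₂ : 0 < a₂) (hb₁ : 0 ≤ b₁) (hb₂ : 0 ≤ b₂)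
    (u : EuclideanSpace ℝ (Fin d)) (hu : ‖u‖ = 1)
    (W W' W'' : ℝ → ℝ)
    (hW : ∀ t : ℝ, 0 < t → W t = Real.sin t / t) (hW0 : W 0 = 1)
    (hW' : ∀ t : ℝ, 0 < t → W' t = (t * Real.cos t - Real.sin t) / t ^ 2)
    (hW'' : ∀ t : ℝ, 0 < t →
      W'' t = (-(t ^ 2) * Real.sin t - 2 * t * Real.cos t + 2 * Real.sin t) / t ^ 3)
    (hW''0 : W'' 0 = -(1 / 3))
    (T : EuclideanSpace ℝ (Fin d) → ℝ)
    (hT0 : T 0 = b₁ + b₂ / 3)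
    (hT : ∀ h : EuclideanSpace ℝ (Fin d), h ≠ 0 →
      T h = b₁ * W (Real.sqrt a₁ * ‖h‖) -
        b₂ * (((⟪h, u⟫ : ℝ) / ‖h‖) ^ 2 * W'' (Real.sqrt a₂ * ‖h‖) +
          (1 - ((⟪h, u⟫ : ℝ) / ‖h‖) ^ 2) *
            (W' (Real.sqrt a₂ * ‖h‖) / (Real.sqrt a₂ * ‖h‖)))) :
    IsStationaryCovariance d T := by
  have hdim : Module.finrank ℝ (EuclideanSpace ℝ (Fin d)) ≤ 3 := by simpa using hd3
  exact fun n x v ↦ statement_14_general hdim (Real.sqrt_nonneg a₁) (Real.sqrt_pos.2 ha₂)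
    hb₁ hb₂ hu hW hW0 hW' hW'' hW''0 hT0 hT x v
end
end
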